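/- Let K be a number field, f ∈ O_K[X] monic squarefree of odd degree at least 3, and S a finite set of nonzero primes of O_K such that O := O_{K,S} is a PID; let δ be a density on O. Let A, B, C ∈ O[X] with B² − A·C = f, [A,2B,C] primitive over O[X], A coprime to f in K[X], and assume there exist no ε ∈ Kˣ and p ∈ K[X] with f dividing A − ε·p² in K[X]. Let E ⊆ Oˣ be a finite set of representatives of Oˣ/(Oˣ)², and for each ε ∈ E let ρ_ε be a root of f in a fixed algebraic closure K̄ such that ε·A(ρ_ε) is not a square in K(ρ_ε) (such roots exist); let P_ε be the set of nonzero prime ideals 𝔭 of the ring of integers of K(ρ_ε) such that 𝔭 does not lie above any prime of S, 𝔭 has residue (inertia) degree 1 over K, and the residue of ε·A(ρ_ε) modulo 𝔭 is a nonzero nonsquare in the residue field. Then δ(T_triv) ≤ Σ_{ε ∈ E} inf_F ∏_{𝔭 ∈ F} (1 − 1/N(𝔭)), where the infimum is over finite subsets F of P_ε, N(𝔭) is the cardinality of the residue field of 𝔭, and T_triv := {n ∈ O : [A(n), 2B(n), C(n)] is GL₂ᵗʷ-equivalent over O to [1, 0, −f(n)]}. -/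

import Mathlib

open Polynomial IntermediateField IsDedekindDomain NumberField

set_option maxHeartbeats 4000000
set_option synthInstance.maxHeartbeats 1000000

/-- The ring of `S`-integers of a number field `K`. -/
noncomputable abbrev SInt (K : Type*) [Field K] [NumberField K]
    (S : Finset (HeightOneSpectrum (𝓞 K))) : Type _ :=
  ((S : Set (HeightOneSpectrum (𝓞 K))).integer K)

/-- `O_{K,S}` acts on any intermediate field of `K̄/K` through `K`. -/
noncomputable instance (K : Type*) [Field K] [NumberField K]
    (S : Finset (HeightOneSpectrum (𝓞 K))) (L : IntermediateField K (AlgebraicClosure K)) :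
    Algebra (SInt K S) L :=
  ((algebraMap K L).comp (algebraMap (SInt K S) K)).toAlgebra

/-!
If the form specialized at `n` is trivial, then evaluating at `(1, 0)` shows that
`ε A(n) = s² - f(n) t²` for some `ε ∈ E`. Let `L = K(ρ_ε)`, let `P` be a prime of `L` whose
residue field is `𝔽_p`, and suppose that `n ≡ ρ_ε` modulo `P`; then `f(n) ≡ 0`, so
`ε A(ρ_ε) ≡ s²` is a square modulo `P`. Hence `n` avoids a residue class modulo `P` as soon as
`ε A(ρ_ε)` is not a square modulo `P`. By the Chinese remainder theorem, the set of all such `n`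
has density zero if `∑ 1/p` diverges over the `p` for which there is such a `P`.

For the divergence, let `α ∈ 𝓞_L` be a nonsquare and `M = L(√α)`. Up to finitely many exceptions,
a prime `P` of `L` modulo which `α` is a square has two primes of the same norm above it in `M`,
so the sum of `N(P)⁻ˢ` over these `P` is at most half of the sum over all primes of `M`. For `L`
as well as for `M`, the sum over all primes is `-log (s - 1) + O(1)` as `s → 1⁺`: this follows from
the simple pole of the zeta function, because writing ideals as a square times a squarefree ideal
gives `∏ (1 + N(P)⁻ˢ) ≤ ζ(s) ≤ ζ(2s) ∏ (1 + N(P)⁻ˢ)`. Hence `∑ N(P)⁻¹` diverges over the primes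
modulo which `α` is not a square, and those with `N(P)` not prime contribute a finite amount.
-/

section Series

variable {ι β : Type*}

lemma hasSum_comp_of_hasSum_card_fiber {N : ι → β} (hN : ∀ b, Finite {i // N i = b})
    {g : β → ℝ} (hg : ∀ b, 0 ≤ g b) {a : ℝ}
    (h : HasSum (fun b ↦ (Nat.card {i // N i = b} : ℝ) * g b) a) :
    HasSum (fun i ↦ g (N i)) a := by
  have hfiber (b : β) :
      HasSum (fun i : {i // N i = b} ↦ g (N i)) ((Nat.card {i // N i = b} : ℝ) * g b) := by
    have := Fintype.ofFinite {i // N i = b}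
    convert hasSum_fintype fun i : {i // N i = b} ↦ g (N i) using 1
    rw [Finset.sum_congr rfl fun i _ ↦ congrArg g i.2]
    simp
  have hsum : Summable fun x : (b : β) × {i // N i = b} ↦ g (N x.2) := by
    rw [summable_sigma_of_nonneg fun _ ↦ hg _]
    exact ⟨fun b ↦ (hfiber b).summable, h.summable.congr fun b ↦ (hfiber b).tsum_eq.symm⟩
  rw [← (Equiv.sigmaFiberEquiv N).hasSum_iff]
  exact (hsum.hasSum.sigma hfiber).unique h ▸ hsum.hasSum

lemma summable_comp_of_card_fiber_le {N : ι → β} (hN : ∀ b, Finite {i // N i = b}) {c : ℕ}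
    (hc : ∀ b, Nat.card {i // N i = b} ≤ c) {g : β → ℝ} (hg : ∀ b, 0 ≤ g b) (h : Summable g) :
    Summable fun i ↦ g (N i) := by
  refine (hasSum_comp_of_hasSum_card_fiber hN hg (Summable.hasSum ?_)).summable
  refine (h.mul_left (c : ℝ)).of_nonneg_of_le (fun b ↦ mul_nonneg (Nat.cast_nonneg _) (hg b))
    fun b ↦ mul_le_mul_of_nonneg_right ?_ (hg b)
  exact_mod_cast hc b

lemma sub_sq_le_log_one_add {x : ℝ} (hx : 0 ≤ x) : x - x ^ 2 ≤ Real.log (1 + x) := by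
  have hpos : 0 < 1 + x := by positivity
  refine le_trans ?_ (Real.one_sub_inv_le_log_of_pos hpos)
  rw [show 1 - (1 + x)⁻¹ = x / (1 + x) by field_simp; ring, le_div_iff₀ hpos]
  nlinarith [pow_nonneg hx 3]

variable {x : ι → ℝ}

lemma log_tsum_finset_prod (hx₀ : ∀ i, 0 ≤ x i) (hx : Summable x) :
    Real.log (∑' H : Finset ι, ∏ i ∈ H, x i) = ∑' i, Real.log (1 + x i) := by
  rw [← tprod_one_add (summable_finsetProd_of_summable_nonneg hx₀ hx),
    ← Real.rexp_tsum_eq_tprod (fun i ↦ by linarith [hx₀ i])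
      (Real.summable_log_one_add_of_summable hx), Real.log_exp]

lemma log_tsum_finset_prod_le (hx₀ : ∀ i, 0 ≤ x i) (hx : Summable x) :
    Real.log (∑' H : Finset ι, ∏ i ∈ H, x i) ≤ ∑' i, x i := by
  rw [log_tsum_finset_prod hx₀ hx]
  refine (Real.summable_log_one_add_of_summable hx).tsum_le_tsum (fun i ↦ ?_) hx
  linarith [Real.log_le_sub_one_of_pos (show 0 < 1 + x i by linarith [hx₀ i])]

lemma tsum_sub_tsum_sq_le_log_tsum_finset_prod (hx₀ : ∀ i, 0 ≤ x i) (hx : Summable x) :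
    ∑' i, x i - ∑' i, x i ^ 2 ≤ Real.log (∑' H : Finset ι, ∏ i ∈ H, x i) := by
  have hsq : Summable fun i ↦ x i ^ 2 := by
    simpa only [sq, Function.comp_def] using
      (hx.mul_of_nonneg hx hx₀ hx₀).comp_injective (i := fun i ↦ (i, i))
        fun _ _ h ↦ congrArg Prod.fst h
  rw [log_tsum_finset_prod hx₀ hx, ← hx.tsum_sub hsq]
  exact (hx.sub hsq).tsum_le_tsum (fun i ↦ sub_sq_le_log_one_add (hx₀ i))
    (Real.summable_log_one_add_of_summable hx)

lemma two_mul_tsum_le_of_injective_sumElim {ι β : Type*} {f : ι → ℝ} {g : β → ℝ} {u v : ι → β}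
    (hf : Summable f) (hg : Summable g) (hg0 : ∀ b, 0 ≤ g b)
    (hinj : Function.Injective (Sum.elim u v)) (hu : ∀ i, f i ≤ g (u i)) (hv : ∀ i, f i ≤ g (v i)) :
    2 * ∑' i, f i ≤ ∑' b, g b := by
  have hu_sum : Summable (g ∘ u) := hg.comp_injective (hinj.comp Sum.inl_injective)
  have hv_sum : Summable (g ∘ v) := hg.comp_injective (hinj.comp Sum.inr_injective)
  calc 2 * ∑' i, f i = ∑' i, f i + ∑' i, f i := two_mul _
    _ ≤ ∑' i, g (u i) + ∑' i, g (v i) :=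
        add_le_add (hf.tsum_le_tsum hu hu_sum) (hf.tsum_le_tsum hv hv_sum)
    _ = ∑' i, (g ∘ Sum.elim u v) i := (Summable.tsum_sum (f := g ∘ Sum.elim u v) hu_sum hv_sum).symm
    _ ≤ ∑' b, g b := tsum_comp_le_tsum_of_inj hg hg0 hinj

end Series

section SquarefreeIdeals

variable {R : Type*} [CommRing R] [IsDedekindDomain R]

lemma exists_eq_sq_mul_prod_asIdeal (I : Ideal R) :
    ∃ (J : Ideal R) (H : Finset (HeightOneSpectrum R)), I = J ^ 2 * ∏ P ∈ H, P.asIdeal := by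
  classical
  induction I using UniqueFactorizationMonoid.induction_on_prime with
  | h₁ => exact ⟨0, ∅, by simp⟩
  | h₂ I hI => exact ⟨1, ∅, by simpa [Ideal.one_eq_top, Ideal.top_pow] using Ideal.isUnit_iff.mp hI⟩
  | h₃ I p _ hp ih =>
    obtain ⟨J, H, rfl⟩ := ih
    let P : HeightOneSpectrum R := ⟨p, Ideal.isPrime_of_prime hp, hp.ne_zero⟩
    by_cases hP : P ∈ H
    · refine ⟨p * J, H.erase P, ?_⟩
      rw [← Finset.mul_prod_erase H _ hP]
      ring
    · refine ⟨J, insert P H, ?_⟩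
      rw [Finset.prod_insert hP]
      ring

lemma asIdeal_dvd_prod_asIdeal_iff {P : HeightOneSpectrum R} {H : Finset (HeightOneSpectrum R)} :
    P.asIdeal ∣ ∏ Q ∈ H, Q.asIdeal ↔ P ∈ H := by
  refine ⟨fun h ↦ ?_, Finset.dvd_prod_of_mem _⟩
  obtain ⟨Q, hQ, hPQ⟩ := (P.prime.dvd_finsetProd_iff _).mp h
  rwa [HeightOneSpectrum.ext
    (associated_iff_eq.mp ((P.prime.dvd_prime_iff_associated Q.prime).mp hPQ))]

lemma prod_asIdeal_injective :
    Function.Injective fun H : Finset (HeightOneSpectrum R) ↦ ∏ P ∈ H, P.asIdeal :=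
  fun H₁ H₂ (h : ∏ P ∈ H₁, P.asIdeal = ∏ P ∈ H₂, P.asIdeal) ↦ Finset.ext fun P ↦ by
    rw [← asIdeal_dvd_prod_asIdeal_iff, ← asIdeal_dvd_prod_asIdeal_iff, h]

end SquarefreeIdeals

section IdealZeta

open Filter Topology

variable (F : Type*) [Field F] [NumberField F] {s : ℝ}

/-- The Dedekind zeta function at a real argument, as a sum over ideals. The zero ideal is
included and contributes the junk value `0 ^ (-s) = 0` when `s ≠ 0`. -/
noncomputable def idealZetaSum (s : ℝ) : ℝ :=
  ∑' I : Ideal (𝓞 F), (I.absNorm : ℝ) ^ (-s)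

variable {F}

lemma lseriesSummable_card_absNorm (hs : 1 < s) :
    LSeriesSummable (fun n ↦ (Nat.card {I : Ideal (𝓞 F) // I.absNorm = n} : ℂ)) s := by
  -- A divergent L-series has the junk value `0`, whereas `ζ_F` has a pole at `1`.
  have hne : ∀ᶠ t : ℝ in 𝓝[>] 1, (t - 1 : ℂ) * dedekindZeta F t ≠ 0 :=
    (tendsto_sub_one_mul_dedekindZeta_nhdsGT F).eventually_ne
      (Complex.ofReal_ne_zero.mpr (dedekindZeta_residue_ne_zero F))
  obtain ⟨t, ht, hts⟩ := (hne.and (Ioo_mem_nhdsGT hs)).exists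
  have hsummable := not_imp_comm.mp (LSeries.eq_zero_of_not_LSeriesSummable _ _)
    (right_ne_zero_of_mul ht)
  exact hsummable.of_re_le_re (by simpa using hts.2.le)

lemma term_card_absNorm (hs : 1 < s) (n : ℕ) :
    LSeries.term (fun n ↦ (Nat.card {I : Ideal (𝓞 F) // I.absNorm = n} : ℂ)) s n =
      ((Nat.card {I : Ideal (𝓞 F) // I.absNorm = n} * (n : ℝ) ^ (-s) : ℝ) : ℂ) := by
  rcases eq_or_ne n 0 with rfl | hn
  · simp [Real.zero_rpow (by linarith : -s ≠ 0)]
  · rw [LSeries.term_of_ne_zero hn, Complex.ofReal_mul, Complex.ofReal_cpow (Nat.cast_nonneg n),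
      Complex.ofReal_neg, Complex.cpow_neg, div_eq_mul_inv]
    rfl

lemma hasSum_absNorm_rpow_neg (hs : 1 < s) :
    HasSum (fun I : Ideal (𝓞 F) ↦ (I.absNorm : ℝ) ^ (-s)) (dedekindZeta F s).re := by
  refine hasSum_comp_of_hasSum_card_fiber (g := fun n : ℕ ↦ (n : ℝ) ^ (-s))
    Ideal.finite_setOfPred_absNorm_eq (fun n ↦ by positivity) ?_
  have h := Complex.hasSum_re (lseriesSummable_card_absNorm (F := F) hs).LSeriesHasSum
  simp only [term_card_absNorm hs, Complex.ofReal_re] at h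
  exact h

lemma summable_absNorm_rpow_neg (hs : 1 < s) :
    Summable fun I : Ideal (𝓞 F) ↦ (I.absNorm : ℝ) ^ (-s) :=
  (hasSum_absNorm_rpow_neg hs).summable

lemma tendsto_sub_one_mul_idealZetaSum :
    Tendsto (fun s : ℝ ↦ (s - 1) * idealZetaSum F s) (𝓝[>] 1) (𝓝 (dedekindZeta_residue F)) := by
  refine ((Complex.continuous_re.tendsto _).comp
    (tendsto_sub_one_mul_dedekindZeta_nhdsGT F)).congr' ?_
  filter_upwards [self_mem_nhdsWithin] with s hs
  rw [idealZetaSum, (hasSum_absNorm_rpow_neg hs).tsum_eq, Function.comp_apply,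
    ← Complex.ofReal_one, ← Complex.ofReal_sub, Complex.re_ofReal_mul]

lemma one_le_idealZetaSum (hs : 1 < s) : 1 ≤ idealZetaSum F s := by
  simpa [idealZetaSum] using
    (summable_absNorm_rpow_neg (F := F) hs).le_tsum ⊤ fun I _ ↦ by positivity

lemma idealZetaSum_antitoneOn : AntitoneOn (idealZetaSum F) (Set.Ioi 1) := by
  intro s hs t ht hst
  refine (summable_absNorm_rpow_neg ht).tsum_le_tsum (fun I ↦ ?_) (summable_absNorm_rpow_neg hs)
  rcases Nat.eq_zero_or_pos I.absNorm with hI | hI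
  · rw [Set.mem_Ioi] at hs ht
    rw [hI, Nat.cast_zero, Real.zero_rpow (by linarith), Real.zero_rpow (by linarith)]
  · exact Real.rpow_le_rpow_of_exponent_le (by exact_mod_cast hI) (by linarith)

lemma summable_asIdeal_absNorm_rpow_neg (hs : 1 < s) :
    Summable fun P : HeightOneSpectrum (𝓞 F) ↦ (P.asIdeal.absNorm : ℝ) ^ (-s) :=
  (summable_absNorm_rpow_neg hs).comp_injective
    (i := fun P : HeightOneSpectrum (𝓞 F) ↦ P.asIdeal) fun _ _ h ↦ HeightOneSpectrum.ext h

lemma summable_finset_prod_absNorm_rpow_neg (hs : 1 < s) :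
    Summable fun H : Finset (HeightOneSpectrum (𝓞 F)) ↦
      ∏ P ∈ H, (P.asIdeal.absNorm : ℝ) ^ (-s) :=
  summable_finsetProd_of_summable_nonneg (fun _ ↦ by positivity)
    (summable_asIdeal_absNorm_rpow_neg hs)

lemma prod_absNorm_rpow (H : Finset (HeightOneSpectrum (𝓞 F))) (s : ℝ) :
    ∏ P ∈ H, (P.asIdeal.absNorm : ℝ) ^ s = ((∏ P ∈ H, P.asIdeal).absNorm : ℝ) ^ s := by
  rw [Real.finsetProd_rpow _ _ fun _ _ ↦ Nat.cast_nonneg _, map_prod, Nat.cast_prod]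

lemma tsum_finset_prod_le_idealZetaSum (hs : 1 < s) :
    ∑' H : Finset (HeightOneSpectrum (𝓞 F)), ∏ P ∈ H, (P.asIdeal.absNorm : ℝ) ^ (-s) ≤
      idealZetaSum F s := by
  simp_rw [prod_absNorm_rpow]
  exact tsum_comp_le_tsum_of_inj (summable_absNorm_rpow_neg hs) (fun _ ↦ by positivity)
    prod_asIdeal_injective

lemma idealZetaSum_le_mul_tsum_finset_prod (hs : 1 < s) :
    idealZetaSum F s ≤ idealZetaSum F (2 * s) *
      ∑' H : Finset (HeightOneSpectrum (𝓞 F)), ∏ P ∈ H, (P.asIdeal.absNorm : ℝ) ^ (-s) := by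
  let g : Ideal (𝓞 F) × Finset (HeightOneSpectrum (𝓞 F)) → ℝ := fun x ↦
    (x.1.absNorm : ℝ) ^ (-(2 * s)) * ∏ P ∈ x.2, (P.asIdeal.absNorm : ℝ) ^ (-s)
  have hsq := summable_absNorm_rpow_neg (F := F) (s := 2 * s) (by linarith)
  have hprod := summable_finset_prod_absNorm_rpow_neg (F := F) hs
  have hg₀ (x) : 0 ≤ g x := mul_nonneg (by positivity) (Finset.prod_nonneg fun _ _ ↦ by positivity)
  have hg : Summable g := hsq.mul_of_nonneg hprod (fun _ ↦ by positivity)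
    fun _ ↦ Finset.prod_nonneg fun _ _ ↦ by positivity
  choose J H hJH using exists_eq_sq_mul_prod_asIdeal (R := 𝓞 F)
  have hinj : Function.Injective fun I ↦ (J I, H I) := fun I₁ I₂ h ↦ by
    obtain ⟨hJ, hH⟩ := Prod.mk.inj h
    rw [hJH I₁, hJH I₂, hJ, hH]
  calc idealZetaSum F s
      = ∑' I, g (J I, H I) := tsum_congr fun I ↦ by
        conv_lhs => rw [hJH I]
        simp only [g]
        rw [prod_absNorm_rpow, map_mul, map_pow, Nat.cast_mul, Nat.cast_pow,
          Real.mul_rpow (by positivity) (by positivity), ← Real.rpow_natCast,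
          ← Real.rpow_mul (by positivity), Nat.cast_ofNat, mul_neg]
    _ ≤ ∑' x, g x := tsum_comp_le_tsum_of_inj hg hg₀ hinj
    _ = _ := (hsq.tsum_mul_tsum hprod hg).symm

lemma tsum_sq_absNorm_rpow_neg_le (hs : 1 < s) :
    ∑' P : HeightOneSpectrum (𝓞 F), ((P.asIdeal.absNorm : ℝ) ^ (-s)) ^ 2 ≤
      idealZetaSum F (2 * s) := by
  simp_rw [← Real.rpow_mul_natCast (Nat.cast_nonneg _)]
  rw [show -s * (2 : ℕ) = -(2 * s) by push_cast; ring]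
  exact tsum_comp_le_tsum_of_inj (summable_absNorm_rpow_neg (by linarith)) (fun _ ↦ by positivity)
    fun _ _ h ↦ HeightOneSpectrum.ext h

lemma primeIdealZetaSum_univ (s : ℝ) :
    (Set.univ : Set (HeightOneSpectrum (𝓞 F))).primeIdealZetaSum s =
      ∑' P : HeightOneSpectrum (𝓞 F), (P.asIdeal.absNorm : ℝ) ^ (-s) := by
  rw [Set.primeIdealZetaSum_def,
    tsum_univ fun P : HeightOneSpectrum (𝓞 F) ↦ (P.asIdeal.absNorm : ℝ) ^ (-s)]

lemma abs_primeIdealZetaSum_univ_sub_log_idealZetaSum_le (hs : 1 < s) :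
    |(Set.univ : Set (HeightOneSpectrum (𝓞 F))).primeIdealZetaSum s - Real.log (idealZetaSum F s)| ≤
      idealZetaSum F 2 := by
  have hpos : ∀ P : HeightOneSpectrum (𝓞 F), 0 ≤ (P.asIdeal.absNorm : ℝ) ^ (-s) :=
    fun _ ↦ by positivity
  have hsum := summable_asIdeal_absNorm_rpow_neg (F := F) hs
  have hfinset : 1 ≤ ∑' H : Finset (HeightOneSpectrum (𝓞 F)),
      ∏ P ∈ H, (P.asIdeal.absNorm : ℝ) ^ (-s) := by
    simpa using (summable_finset_prod_absNorm_rpow_neg hs).le_tsum ∅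
      fun H _ ↦ Finset.prod_nonneg fun P _ ↦ hpos P
  have hdouble : 1 ≤ idealZetaSum F (2 * s) := one_le_idealZetaSum (by linarith)
  have hle_two : idealZetaSum F (2 * s) ≤ idealZetaSum F 2 :=
    idealZetaSum_antitoneOn (Set.mem_Ioi.mpr one_lt_two) (Set.mem_Ioi.mpr (by linarith))
      (by linarith)
  have hupper : Real.log (idealZetaSum F s) ≤ Real.log (idealZetaSum F (2 * s)) +
      ∑' P : HeightOneSpectrum (𝓞 F), (P.asIdeal.absNorm : ℝ) ^ (-s) :=
    calc Real.log (idealZetaSum F s) ≤ Real.log (idealZetaSum F (2 * s) * _) :=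
          Real.log_le_log (by linarith [one_le_idealZetaSum (F := F) hs])
            (idealZetaSum_le_mul_tsum_finset_prod hs)
      _ = Real.log (idealZetaSum F (2 * s)) + Real.log _ :=
          Real.log_mul (by positivity) (by positivity)
      _ ≤ _ := by gcongr; exact log_tsum_finset_prod_le hpos hsum
  have hlower := (tsum_sub_tsum_sq_le_log_tsum_finset_prod hpos hsum).trans
    (Real.log_le_log (by positivity) (tsum_finset_prod_le_idealZetaSum hs))
  rw [primeIdealZetaSum_univ, abs_le]
  constructor <;> linarith [tsum_sq_absNorm_rpow_neg_le (F := F) hs,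
    Real.log_le_sub_one_of_pos (zero_lt_one.trans_le hdouble)]

lemma primeIdealZetaSum_univ_add_log_isBigO_one :
    (fun s : ℝ ↦ (Set.univ : Set (HeightOneSpectrum (𝓞 F))).primeIdealZetaSum s +
      Real.log (s - 1)) =O[𝓝[>] 1] fun _ ↦ (1 : ℝ) := by
  have hlog := (tendsto_sub_one_mul_idealZetaSum (F := F)).log (dedekindZeta_residue_ne_zero F)
  have hdiff : (fun s : ℝ ↦ (Set.univ : Set (HeightOneSpectrum (𝓞 F))).primeIdealZetaSum s -
      Real.log (idealZetaSum F s)) =O[𝓝[>] 1] fun _ ↦ (1 : ℝ) := by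
    refine Asymptotics.IsBigO.of_bound (idealZetaSum F 2) ?_
    filter_upwards [self_mem_nhdsWithin] with s hs
    simpa using abs_primeIdealZetaSum_univ_sub_log_idealZetaSum_le hs
  refine (hdiff.add (hlog.isBigO_one ℝ)).congr' ?_ EventuallyEq.rfl
  filter_upwards [self_mem_nhdsWithin] with s hs
  rw [Real.log_mul (sub_pos.mpr hs).ne' (zero_lt_one.trans_le (one_le_idealZetaSum hs)).ne']
  ring

end IdealZeta

section QuadraticExtension

lemma comap_ne_self_of_sq_sub_mem {R T : Type*} [CommRing R] [CommRing T] [Algebra R T]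
    {σ : T ≃ₐ[R] T} {ω : T} {α t : R} (hσ : σ ω = -ω) (hω : ω ^ 2 = algebraMap R T α)
    {Q : Ideal T} [hQ : Q.IsPrime] (hα : 2 * α ∉ Q.under R) (ht : t ^ 2 - α ∈ Q.under R) :
    Q.comap σ ≠ Q := by
  intro hQσ
  have hprod : (algebraMap R T t - ω) * (algebraMap R T t + ω) ∈ Q := by
    convert Ideal.mem_comap.mp ht using 1
    rw [map_sub, map_pow, ← hω]
    ring
  have hswap : ∀ {x : T}, σ x ∈ Q ↔ x ∈ Q := fun {x} ↦ by
    conv_rhs => rw [← hQσ]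
    exact Ideal.mem_comap.symm
  have hmem : algebraMap R T t - ω ∈ Q ∧ algebraMap R T t + ω ∈ Q := by
    rcases hQ.mem_or_mem hprod with h | h <;> refine ⟨?_, ?_⟩ <;> try exact h
    all_goals
      refine hswap.mp ?_
      simpa [hσ, sub_eq_add_neg] using h
  refine hα (Ideal.mem_comap.mpr ?_)
  convert Q.mul_mem_left ω (Q.sub_mem hmem.2 hmem.1) using 1
  rw [map_mul, ← hω, map_ofNat]
  ring

lemma isSquare_quotientMk_iff {R : Type*} [CommRing R] {I : Ideal R} {α : R} :
    IsSquare (Ideal.Quotient.mk I α) ↔ ∃ t, t ^ 2 - α ∈ I := by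
  simp only [isSquare_iff_exists_sq, Ideal.Quotient.mk_surjective.exists, ← map_pow,
    eq_comm (a := Ideal.Quotient.mk I α), Ideal.Quotient.mk_eq_mk_iff_sub_mem]

lemma finite_setOf_mem_asIdeal {R : Type*} [CommRing R] [IsDedekindDomain R] {x : R} (hx : x ≠ 0) :
    {P : HeightOneSpectrum R | x ∈ P.asIdeal}.Finite := by
  simpa only [Ideal.dvd_span_singleton] using
    Ideal.finite_factors (I := Ideal.span {x}) (by simpa using hx)

open QuadraticAlgebra in
lemma exists_quadratic_extension.{u} {L : Type u} [Field L] [NumberField L] {α : L}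
    (hα : ¬ IsSquare α) :
    ∃ (M : Type u) (_ : Field M) (_ : NumberField M) (_ : Algebra L M) (σ : M ≃ₐ[L] M) (w : M),
      Module.finrank L M = 2 ∧ w ^ 2 = algebraMap L M α ∧ σ w = -w := by
  have : Fact (∀ r : L, r ^ 2 ≠ α + 0 * r) := ⟨fun r h ↦ hα ⟨r, by simpa [sq] using h.symm⟩⟩
  let σ : QuadraticAlgebra L α 0 ≃ₐ[L] QuadraticAlgebra L α 0 :=
    AlgEquiv.ofRingEquiv (f := starRingAut) fun r ↦ by ext <;> simp
  have : NumberField (QuadraticAlgebra L α 0) := .of_module_finite L _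
  exact ⟨QuadraticAlgebra L α 0, inferInstance, this, inferInstance, σ, omega, finrank_eq_two _ _,
    by rw [sq, omega_mul_omega_eq_add, zero_smul, add_zero, Algebra.smul_def, mul_one],
    by ext <;> simp [σ]⟩

variable {L M : Type*} [Field L] [Field M] [Algebra L M]

/-- The primes of a number field modulo which the algebraic integer `α` is not a square. -/
def nonsquarePrimes (α : 𝓞 L) : Set (HeightOneSpectrum (𝓞 L)) :=
  {P | ¬ IsSquare (Ideal.Quotient.mk P.asIdeal α)}

lemma exists_liesOver_comap_ne_self {σ : M ≃ₐ[L] M} {w : M} {α : 𝓞 L} (hσ : σ w = -w)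
    (hw : w ^ 2 = algebraMap L M α) {P : HeightOneSpectrum (𝓞 L)} (hP : P ∉ nonsquarePrimes α)
    (hα : 2 * α ∉ P.asIdeal) :
    ∃ Q : Ideal (𝓞 M), Q.IsPrime ∧ Q.LiesOver P.asIdeal ∧
      Q.comap (RingOfIntegers.mapAlgEquiv σ : 𝓞 M ≃ₐ[𝓞 L] 𝓞 M) ≠ Q := by
  obtain ⟨t, ht⟩ := isSquare_quotientMk_iff.mp (not_not.mp hP)
  obtain ⟨Q, hQ, hQP⟩ := (inferInstance : Nonempty (P.asIdeal.primesOver (𝓞 M)))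
  have hw_int : IsIntegral ℤ w := .of_pow two_pos <| by
    rw [hw]
    exact (RingOfIntegers.isIntegral_coe α).algebraMap
  refine ⟨Q, hQ, hQP, comap_ne_self_of_sq_sub_mem (ω := ⟨w, hw_int⟩) (RingOfIntegers.ext hσ)
    (RingOfIntegers.ext hw) (α := α) (t := t) ?_ ?_⟩ <;> rwa [← hQP.over]

variable [NumberField L] [NumberField M]

lemma absNorm_comap_ringEquiv (σ : 𝓞 M ≃+* 𝓞 M) (Q : Ideal (𝓞 M)) :
    (Q.comap σ).absNorm = Q.absNorm :=
  Nat.card_congr (Ideal.quotientEquiv (Q.comap σ) Q σ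
    (Ideal.map_comap_of_surjective σ σ.surjective Q).symm).toEquiv

lemma absNorm_le_of_comap_ne_self (hLM : Module.finrank L M = 2) {σ : 𝓞 M ≃ₐ[𝓞 L] 𝓞 M}
    {P : Ideal (𝓞 L)} (hP : P ≠ ⊥) {Q : Ideal (𝓞 M)} [Q.IsPrime] [hQP : Q.LiesOver P]
    (hQ : Q.comap σ ≠ Q) : Q.absNorm ≤ P.absNorm := by
  have hmap_le {Q' : Ideal (𝓞 M)} [h : Q'.LiesOver P] : P.map (algebraMap (𝓞 L) (𝓞 M)) ≤ Q' :=
    Ideal.map_le_iff_le_comap.mpr h.over.le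
  have hQ0 : Q ≠ ⊥ := Ideal.ne_bot_of_liesOver_of_ne_bot hP Q
  have hQmax : Q.IsMaximal := Ideal.IsPrime.isMaximal ‹_› hQ0
  have hcoprime : Q.comap σ ⊔ Q = ⊤ :=
    (Ideal.comap_isMaximal_of_equiv σ).coprime_of_ne hQmax hQ
  have hdvd : Q.absNorm ^ 2 ∣ P.absNorm ^ 2 := by
    calc Q.absNorm ^ 2 = (Q.comap σ * Q).absNorm := by
          rw [map_mul, sq]; congr 1; exact (absNorm_comap_ringEquiv σ.toRingEquiv Q).symm
      _ ∣ (P.map (algebraMap (𝓞 L) (𝓞 M))).absNorm := Ideal.absNorm_dvd_absNorm_of_le <| by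
          rw [Ideal.mul_eq_inf_of_coprime hcoprime]; exact le_inf hmap_le hmap_le
      _ = P.absNorm ^ 2 := by
          rw [Ideal.absNorm_algebraMap, ← IsFractionRing.finrank_eq (𝓞 L) L (𝓞 M) M, hLM]
  exact Nat.le_of_dvd (Nat.pos_of_ne_zero (Ideal.absNorm_ne_zero_iff_mem_nonZeroDivisors.mpr
    (mem_nonZeroDivisors_of_ne_zero hP))) ((Nat.pow_dvd_pow_iff two_ne_zero).mp hdvd)

lemma exists_injective_sumElim_absNorm_le (hLM : Module.finrank L M = 2) {σ : 𝓞 M ≃ₐ[𝓞 L] 𝓞 M}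
    {D : Set (HeightOneSpectrum (𝓞 L))}
    (hD : ∀ P ∈ D, ∃ Q : Ideal (𝓞 M), Q.IsPrime ∧ Q.LiesOver P.asIdeal ∧ Q.comap σ ≠ Q) :
    ∃ u v : D → HeightOneSpectrum (𝓞 M), Function.Injective (Sum.elim u v) ∧
      (∀ P, (u P).asIdeal.absNorm ≤ P.1.asIdeal.absNorm) ∧
      ∀ P, (v P).asIdeal.absNorm ≤ P.1.asIdeal.absNorm := by
  choose! Q hQ hQP hQσ using hD
  let u (P : D) : HeightOneSpectrum (𝓞 M) :=
    haveI := hQP P P.2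
    ⟨Q P, hQ P P.2, Ideal.ne_bot_of_liesOver_of_ne_bot P.1.ne_bot (Q P)⟩
  let v (P : D) : HeightOneSpectrum (𝓞 M) :=
    haveI := hQP P P.2
    haveI := hQ P P.2
    ⟨(Q P).comap σ, inferInstance, Ideal.ne_bot_of_liesOver_of_ne_bot P.1.ne_bot _⟩
  have hu (P : D) : (u P).asIdeal.under (𝓞 L) = P.1.asIdeal := (hQP P P.2).over.symm
  have hv (P : D) : (v P).asIdeal.under (𝓞 L) = P.1.asIdeal :=
    haveI := hQP P P.2
    (Ideal.over_def ((Q P).comap σ) P.1.asIdeal).symm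
  have hnorm (P : D) : (Q P).absNorm ≤ P.1.asIdeal.absNorm :=
    haveI := hQ P P.2
    haveI := hQP P P.2
    absNorm_le_of_comap_ne_self hLM P.1.ne_bot (hQσ P P.2)
  refine ⟨u, v, .sumElim (fun P₁ P₂ h ↦ ?_) (fun P₁ P₂ h ↦ ?_) fun P₁ P₂ h ↦ ?_, hnorm,
    fun P ↦ (absNorm_comap_ringEquiv σ.toRingEquiv (Q P)).trans_le (hnorm P)⟩
  · exact Subtype.ext (HeightOneSpectrum.ext (by rw [← hu, h, hu]))
  · exact Subtype.ext (HeightOneSpectrum.ext (by rw [← hv, h, hv]))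
  · obtain rfl : P₁ = P₂ := Subtype.ext (HeightOneSpectrum.ext (by rw [← hu, h, hv]))
    exact hQσ P₁ P₁.2 (congrArg HeightOneSpectrum.asIdeal h).symm

lemma two_mul_primeIdealZetaSum_le (hLM : Module.finrank L M = 2) {σ : 𝓞 M ≃ₐ[𝓞 L] 𝓞 M}
    {D : Set (HeightOneSpectrum (𝓞 L))}
    (hD : ∀ P ∈ D, ∃ Q : Ideal (𝓞 M), Q.IsPrime ∧ Q.LiesOver P.asIdeal ∧ Q.comap σ ≠ Q)
    {s : ℝ} (hs : 1 < s) :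
    2 * D.primeIdealZetaSum s ≤
      (Set.univ : Set (HeightOneSpectrum (𝓞 M))).primeIdealZetaSum s := by
  obtain ⟨u, v, hinj, hu, hv⟩ := exists_injective_sumElim_absNorm_le hLM hD
  have hrpow (P : D) (Q : HeightOneSpectrum (𝓞 M)) (h : Q.asIdeal.absNorm ≤ P.1.asIdeal.absNorm) :
      (P.1.asIdeal.absNorm : ℝ) ^ (-s) ≤ (Q.asIdeal.absNorm : ℝ) ^ (-s) :=
    Real.rpow_le_rpow_of_nonpos (mod_cast Nat.pos_of_ne_zero
      (Ideal.absNorm_eq_zero_iff.not.mpr Q.ne_bot)) (mod_cast h) (by linarith)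
  rw [Set.primeIdealZetaSum_def, primeIdealZetaSum_univ]
  exact two_mul_tsum_le_of_injective_sumElim
    ((summable_asIdeal_absNorm_rpow_neg hs).comp_injective Subtype.val_injective)
    (summable_asIdeal_absNorm_rpow_neg hs) (fun _ ↦ by positivity) hinj
    (fun P ↦ hrpow P (u P) (hu P)) fun P ↦ hrpow P (v P) (hv P)

lemma primeIdealZetaSum_union_le (D₁ D₂ : Set (HeightOneSpectrum (𝓞 L))) {s : ℝ} (hs : 1 < s) :
    (D₁ ∪ D₂).primeIdealZetaSum s ≤ D₁.primeIdealZetaSum s + D₂.primeIdealZetaSum s := by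
  let f (P : HeightOneSpectrum (𝓞 L)) : ℝ := (P.asIdeal.absNorm : ℝ) ^ (-s)
  have hf : Summable f := summable_asIdeal_absNorm_rpow_neg hs
  have hsum (D : Set (HeightOneSpectrum (𝓞 L))) : D.primeIdealZetaSum s = ∑' P, D.indicator f P :=
    tsum_subtype D f
  rw [hsum, hsum, hsum, ← (hf.indicator D₁).tsum_add (hf.indicator D₂)]
  refine (hf.indicator _).tsum_le_tsum (fun P ↦ ?_) ((hf.indicator D₁).add (hf.indicator D₂))
  have hinter : 0 ≤ (D₁ ∩ D₂).indicator f P := Set.indicator_nonneg (fun _ _ ↦ by positivity) P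
  have := congrFun (Set.indicator_union_add_inter f D₁ D₂) P
  simp only [Pi.add_apply] at this
  linarith

lemma exists_two_mul_primeIdealZetaSum_univ_le.{u} {L : Type u} [Field L] [NumberField L] {α : 𝓞 L}
    (hα : ¬ IsSquare (α : L)) :
    ∃ (M : Type u) (_ : Field M) (_ : NumberField M) (c : ℝ), ∀ s : ℝ, 1 < s →
      2 * (Set.univ : Set (HeightOneSpectrum (𝓞 L))).primeIdealZetaSum s ≤
        (Set.univ : Set (HeightOneSpectrum (𝓞 M))).primeIdealZetaSum s +
          2 * (nonsquarePrimes α).primeIdealZetaSum s + c := by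
  obtain ⟨M, _, _, _, σ, w, hLM, hw, hσw⟩ := exists_quadratic_extension hα
  let exceptional : Set (HeightOneSpectrum (𝓞 L)) := {P | 2 * α ∈ P.asIdeal}
  let split : Set (HeightOneSpectrum (𝓞 L)) := (nonsquarePrimes α)ᶜ ∩ exceptionalᶜ
  have hα0 : 2 * α ≠ 0 := mul_ne_zero two_ne_zero (by rintro rfl; exact hα (by simp))
  have hcover : Set.univ = nonsquarePrimes α ∪ (split ∪ exceptional) := by
    ext P
    simp only [split, Set.mem_univ, Set.mem_union, Set.mem_inter_iff, Set.mem_compl_iff]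
    tauto
  refine ⟨M, inferInstance, inferInstance, 2 * exceptional.ncard, fun s hs ↦ ?_⟩
  have hsplit : 2 * split.primeIdealZetaSum s ≤ _ := two_mul_primeIdealZetaSum_le hLM
    (fun P hP ↦ exists_liesOver_comap_ne_self hσw hw hP.1 hP.2) hs
  have hexceptional := Set.primeIdealZetaSum_le_card_of_finite (finite_setOf_mem_asIdeal hα0)
    (zero_le_one.trans hs.le)
  have h := primeIdealZetaSum_union_le (nonsquarePrimes α) (split ∪ exceptional) hs
  rw [← hcover] at h
  linarith [primeIdealZetaSum_union_le split exceptional hs]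

open Filter Topology in
lemma not_summable_nonsquarePrimes {α : 𝓞 L} (hα : ¬ IsSquare (α : L)) :
    ¬ Summable fun P : nonsquarePrimes α ↦ (P.1.asIdeal.absNorm : ℝ)⁻¹ := by
  intro hsummable
  obtain ⟨M, _, _, c, hc⟩ := exists_two_mul_primeIdealZetaSum_univ_le hα
  set B : ℝ := ∑' P : nonsquarePrimes α, (P.1.asIdeal.absNorm : ℝ)⁻¹
  have hbound : ∀ᶠ s in 𝓝[>] (1 : ℝ), (nonsquarePrimes α).primeIdealZetaSum s ≤ B := by
    filter_upwards [self_mem_nhdsWithin] with s hs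
    refine Summable.tsum_le_tsum (fun P ↦ ?_)
      ((summable_asIdeal_absNorm_rpow_neg hs).comp_injective Subtype.val_injective) hsummable
    rw [← Real.rpow_neg_one]
    refine Real.rpow_le_rpow_of_exponent_le (mod_cast Nat.pos_of_ne_zero ?_) (neg_le_neg hs.le)
    exact Ideal.absNorm_eq_zero_iff.not.mpr P.1.ne_bot
  obtain ⟨k, hk⟩ := (((primeIdealZetaSum_univ_add_log_isBigO_one (F := L)).const_mul_left 2).sub
    (primeIdealZetaSum_univ_add_log_isBigO_one (F := M))).bound
  have hlog : ∀ᶠ s : ℝ in 𝓝[>] 1, Real.log (s - 1) < -k - 2 * B - c := by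
    have hsub : Tendsto (fun s : ℝ ↦ s - 1) (𝓝[>] 1) (𝓝[>] 0) := by
      refine tendsto_nhdsWithin_iff.mpr ⟨?_, ?_⟩
      · simpa using ((continuous_sub_right (1 : ℝ)).tendsto 1).mono_left nhdsWithin_le_nhds
      · filter_upwards [self_mem_nhdsWithin] with s hs using Set.mem_Ioi.mpr (sub_pos.mpr hs)
    exact (Real.tendsto_log_nhdsGT_zero.comp hsub).eventually_lt_atBot _
  obtain ⟨s, hs, hB, hks, hls⟩ : ∃ s : ℝ, 1 < s ∧ _ :=
    (eventually_mem_nhdsWithin.and (hbound.and (hk.and hlog))).exists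
  simp only [norm_one, mul_one, Real.norm_eq_abs] at hks
  linarith [(abs_le.mp hks).1, hc s hs]

end QuadraticExtension

section DegreeOnePrimes

lemma ncard_primesOver_le_finrank {R : Type*} (S : Type*) [CommRing R] [IsDomain R] [CommRing S]
    [Algebra R S] [Module.Finite R S] [Module.Flat R S] (p : Ideal R) [p.IsPrime] :
    (p.primesOver S).ncard ≤ Module.finrank R S := by
  have := (Algebra.QuasiFinite.finite_primesOver (S := S) p).fintype
  rw [← Ideal.sum_ramification_inertia_eq_finrank p S, ← Nat.card_coe_set_eq,
    Nat.card_eq_fintype_card, ← Finset.card_univ, Finset.card_eq_sum_ones]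
  refine Finset.sum_le_sum fun Q _ ↦ ?_
  have := Q.2.1
  exact Nat.mul_pos (Q.1.ramificationIdx_pos R) (Q.1.inertiaDeg_pos R)

variable {L : Type*} [Field L]

lemma mapsTo_asIdeal_primesOver (p : ℕ) :
    Set.MapsTo HeightOneSpectrum.asIdeal
      {P : HeightOneSpectrum (𝓞 L) | (P.asIdeal.under ℤ).absNorm = p}
      ((Ideal.span {(p : ℤ)}).primesOver (𝓞 L)) := by
  rintro P rfl
  exact ⟨P.isPrime, ⟨Int.ideal_span_absNorm_eq_self _⟩⟩

variable [NumberField L]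

lemma finite_setOf_absNorm_under_eq (p : ℕ) :
    {P : HeightOneSpectrum (𝓞 L) | (P.asIdeal.under ℤ).absNorm = p}.Finite :=
  .of_injOn (mapsTo_asIdeal_primesOver p) HeightOneSpectrum.asIdeal_injective.injOn
    (Algebra.QuasiFinite.finite_primesOver _)

lemma ncard_setOf_absNorm_under_eq_le (p : ℕ) :
    {P : HeightOneSpectrum (𝓞 L) | (P.asIdeal.under ℤ).absNorm = p}.ncard ≤
      Module.finrank ℤ (𝓞 L) := by
  rcases Set.eq_empty_or_nonempty
    {P : HeightOneSpectrum (𝓞 L) | (P.asIdeal.under ℤ).absNorm = p} with h | ⟨P, hP⟩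
  · simp [h]
  · have hprime : (Ideal.span {(p : ℤ)}).IsPrime := by
      rw [← hP, Int.ideal_span_absNorm_eq_self]
      infer_instance
    exact (Set.ncard_le_ncard_of_injOn _ (mapsTo_asIdeal_primesOver p)
      HeightOneSpectrum.asIdeal_injective.injOn (Algebra.QuasiFinite.finite_primesOver _)).trans
        (ncard_primesOver_le_finrank (𝓞 L) _)

lemma summable_comp_absNorm_under {g : ℕ → ℝ} (hg : ∀ p, 0 ≤ g p) (h : Summable g) :
    Summable fun P : HeightOneSpectrum (𝓞 L) ↦ g (P.asIdeal.under ℤ).absNorm :=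
  summable_comp_of_card_fiber_le (fun p ↦ finite_setOf_absNorm_under_eq p)
    (fun p ↦ ncard_setOf_absNorm_under_eq_le p) hg h

lemma absNorm_eq_absNorm_under_or_sq_le (P : HeightOneSpectrum (𝓞 L)) :
    P.asIdeal.absNorm = (P.asIdeal.under ℤ).absNorm ∨
      (P.asIdeal.under ℤ).absNorm ^ 2 ≤ P.asIdeal.absNorm := by
  have : NeZero P.asIdeal := ⟨P.ne_bot⟩
  have := P.isMaximal
  have hprime := Nat.absNorm_under_prime P.asIdeal
  obtain ⟨q, k, hk, -, hq, hN⟩ := Ideal.exists_prime_and_absNorm_eq_pow P.asIdeal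
  have hp : (P.asIdeal.under ℤ).absNorm = q := (Nat.prime_dvd_prime_iff_eq hprime hq).mp
    (hprime.dvd_of_dvd_pow (hN ▸ Int.absNorm_under_dvd_absNorm P.asIdeal))
  rw [hp, hN]
  rcases (Nat.succ_le_of_lt hk).eq_or_lt with h | h
  · exact .inl (by rw [← h, pow_one])
  · exact .inr (Nat.pow_le_pow_right hq.pos h)

lemma not_summable_prime_absNorm {D X : Set (HeightOneSpectrum (𝓞 L))}
    (hD : ¬ Summable fun P : D ↦ (P.1.asIdeal.absNorm : ℝ)⁻¹) (hX : X.Finite) :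
    ¬ Summable fun p : {p : ℕ | p.Prime ∧ ∃ P ∈ D \ X, P.asIdeal.absNorm = p} ↦ (p : ℝ)⁻¹ := by
  set Q := {p : ℕ | p.Prime ∧ ∃ P ∈ D \ X, P.asIdeal.absNorm = p}
  intro hQ
  let g (p : ℕ) : ℝ := Q.indicator (fun p ↦ (p : ℝ)⁻¹) p + ((p : ℝ) ^ 2)⁻¹
  have hind (p : ℕ) : 0 ≤ Q.indicator (fun p ↦ (p : ℝ)⁻¹) p :=
    Set.indicator_nonneg (fun _ _ ↦ by positivity) p
  have hg : Summable g :=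
    (summable_subtype_iff_indicator.mp hQ).add (Real.summable_nat_pow_inv.mpr one_lt_two)
  have hsum : Summable fun P : HeightOneSpectrum (𝓞 L) ↦ g (P.asIdeal.under ℤ).absNorm :=
    summable_comp_absNorm_under (fun p ↦ add_nonneg (hind p) (by positivity)) hg
  refine hD ((hX.preimage (Subtype.val_injective (p := (· ∈ D))).injOn).summable_compl_iff.mp ?_)
  refine (hsum.comp_injective (Subtype.val_injective.comp Subtype.val_injective)).of_nonneg_of_le
    (fun _ ↦ by simp only [Function.comp_apply]; positivity) fun P ↦ ?_
  have : NeZero P.1.1.asIdeal := ⟨P.1.1.ne_bot⟩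
  have hprime := Nat.absNorm_under_prime P.1.1.asIdeal
  simp only [Function.comp_apply, g]
  rcases absNorm_eq_absNorm_under_or_sq_le P.1.1 with h | h
  · rw [Set.indicator_of_mem (show _ ∈ Q from ⟨hprime, P.1.1, ⟨P.1.2, P.2⟩, h⟩), h]
    exact le_add_of_nonneg_right (by positivity)
  · refine le_add_of_nonneg_of_le (hind _) (inv_anti₀ ?_ (mod_cast h))
    exact pow_pos (mod_cast hprime.pos) 2

end DegreeOnePrimes

section Density

variable {O : Type*} [CommRing O]

/-- A density on the ring `O`. That `δ P ≥ 0` follows from `union_le`. For nontrivial `O`, the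
normalization `δ O = 1` is the case `I = ⊤` of `ideal`, and `δ P ≤ 1` follows by `mono`. -/
structure IsDensity (δ : Set O → ℝ) : Prop where
  mono : ∀ P Q, P ⊆ Q → δ P ≤ δ Q
  union_le : ∀ P Q, δ (P ∪ Q) ≤ δ P + δ Q
  translate : ∀ (a : O) (P : Set O), δ ((a + ·) '' P) = δ P
  ideal : ∀ I : Ideal O, I ≠ ⊥ → δ (I : Set O) = 1 / (Nat.card (O ⧸ I) : ℝ)

namespace IsDensity

variable {δ : Set O → ℝ}

lemma nonneg (hδ : IsDensity δ) (P : Set O) : 0 ≤ δ P := by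
  have h := hδ.union_le P P
  rw [Set.union_self] at h
  linarith

lemma biUnion_le (hδ : IsDensity δ) {ι : Type*} {s : Finset ι} (hs : s.Nonempty) (T : ι → Set O) :
    δ (⋃ i ∈ s, T i) ≤ ∑ i ∈ s, δ (T i) := by
  classical
  induction hs using Finset.Nonempty.cons_induction with
  | singleton a => simp
  | cons a s ha _ ih =>
    rw [Finset.sum_cons, Finset.cons_eq_insert, Finset.set_biUnion_insert]
    exact (hδ.union_le _ _).trans (by gcongr)

lemma preimage_quotientMk_singleton (hδ : IsDensity δ) {J : Ideal O} (hJ : J ≠ ⊥) (y : O ⧸ J) :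
    δ (Ideal.Quotient.mk J ⁻¹' {y}) = 1 / (Nat.card (O ⧸ J) : ℝ) := by
  obtain ⟨a, rfl⟩ := Ideal.Quotient.mk_surjective y
  rw [← hδ.ideal J hJ, ← hδ.translate a J]
  congr 1
  ext x
  simp [← sub_eq_neg_add, Ideal.Quotient.eq]

lemma preimage_quotientMk_le (hδ : IsDensity δ) {J : Ideal O} (hJ : J ≠ ⊥) [Finite (O ⧸ J)]
    {Y : Set (O ⧸ J)} (hY : Y.Nonempty) :
    δ (Ideal.Quotient.mk J ⁻¹' Y) ≤ Y.ncard / (Nat.card (O ⧸ J) : ℝ) := by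
  have hYfin := Y.toFinite
  have hunion : Ideal.Quotient.mk J ⁻¹' Y =
      ⋃ y ∈ hYfin.toFinset, Ideal.Quotient.mk J ⁻¹' {y} := by
    ext; simp
  calc δ (Ideal.Quotient.mk J ⁻¹' Y)
      ≤ ∑ y ∈ hYfin.toFinset, δ (Ideal.Quotient.mk J ⁻¹' {y}) := by
        rw [hunion]
        exact hδ.biUnion_le (hYfin.toFinset_nonempty.mpr hY) _
    _ = Y.ncard / (Nat.card (O ⧸ J) : ℝ) := by
        simp only [hδ.preimage_quotientMk_singleton hJ]
        rw [Finset.sum_const, nsmul_eq_mul, mul_one_div, Set.ncard_eq_toFinset_card Y hYfin]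

variable [Infinite O]

lemma le_prod_of_forall_quotientMk_ne (hδ : IsDensity δ) {ι : Type*} [Fintype ι] {I : ι → Ideal O}
    (hI : Pairwise (Function.onFun IsCoprime I)) (hcard : ∀ i, 1 < Nat.card (O ⧸ I i))
    {r : ∀ i, O ⧸ I i} {T : Set O} (hT : ∀ n ∈ T, ∀ i, Ideal.Quotient.mk (I i) n ≠ r i) :
    δ T ≤ ∏ i, (1 - 1 / (Nat.card (O ⧸ I i) : ℝ)) := by
  have hfin (i : ι) : Finite (O ⧸ I i) := Nat.finite_of_card_ne_zero (hcard i).ne_bot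
  have hnontrivial (i : ι) : Nontrivial (O ⧸ I i) := Finite.one_lt_card_iff_nontrivial.mp (hcard i)
  let e := Ideal.quotientInfRingEquivPiQuotient I hI
  have : Finite (O ⧸ ⨅ i, I i) := .of_equiv _ e.symm.toEquiv
  have hbot : ⨅ i, I i ≠ ⊥ := fun h ↦ Infinite.not_finite <|
    Finite.of_equiv (O ⧸ ⨅ i, I i) ((Ideal.quotEquivOfEq h).trans (.quotientBot O)).toEquiv
  let Z : Set (∀ i, O ⧸ I i) := Set.univ.pi fun i ↦ {r i}ᶜ
  have hncard : (e ⁻¹' Z).ncard = ∏ i, (Nat.card (O ⧸ I i) - 1) := by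
    rw [Set.ncard_preimage_of_injective_subset_range e.injective (by simp [e.surjective.range_eq]),
      ← Nat.card_coe_set_eq, Nat.card_congr (Equiv.Set.univPi _), Nat.card_pi]
    exact Finset.prod_congr rfl fun i _ ↦ by
      rw [Nat.card_coe_set_eq, Set.ncard_compl, Set.ncard_singleton]
  have hZ : (e ⁻¹' Z).Nonempty :=
    (Set.univ_pi_nonempty_iff.mpr fun i ↦ exists_ne (r i)).preimage e.surjective
  calc δ T ≤ δ (Ideal.Quotient.mk (⨅ i, I i) ⁻¹' (e ⁻¹' Z)) :=
        hδ.mono _ _ fun n hn i _ ↦ hT n hn i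
    _ ≤ (e ⁻¹' Z).ncard / (Nat.card (O ⧸ ⨅ i, I i) : ℝ) := hδ.preimage_quotientMk_le hbot hZ
    _ = ∏ i, (1 - 1 / (Nat.card (O ⧸ I i) : ℝ)) := by
        rw [hncard, Nat.card_congr e.toEquiv, Nat.card_pi, Nat.cast_prod, Nat.cast_prod,
          ← Finset.prod_div_distrib]
        refine Finset.prod_congr rfl fun i _ ↦ ?_
        have := Nat.card_pos (α := O ⧸ I i)
        rw [Nat.cast_pred this, sub_div, div_self (by positivity)]

lemma eq_zero_of_not_summable (hδ : IsDensity δ) {ι : Type*} {I : ι → Ideal O}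
    (hI : Pairwise (Function.onFun IsCoprime I)) (hcard : ∀ i, 1 < Nat.card (O ⧸ I i))
    {r : ∀ i, O ⧸ I i} {T : Set O} (hT : ∀ n ∈ T, ∀ i, Ideal.Quotient.mk (I i) n ≠ r i)
    (hdiv : ¬ Summable fun i ↦ (Nat.card (O ⧸ I i) : ℝ)⁻¹) : δ T = 0 := by
  by_contra hne
  have hpos : 0 < δ T := (hδ.nonneg T).lt_of_ne' hne
  refine hdiv (summable_of_sum_le (c := -Real.log (δ T)) (fun _ ↦ by positivity) fun s ↦ ?_)
  have hprod : δ T ≤ ∏ i : s, (1 - 1 / (Nat.card (O ⧸ I i) : ℝ)) :=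
    hδ.le_prod_of_forall_quotientMk_ne (I := fun i : s ↦ I i) (r := fun i : s ↦ r i)
      (hI.comp_of_injective Subtype.val_injective) (fun i ↦ hcard i) fun n hn i ↦ hT n hn i
  have hle : δ T ≤ Real.exp (-∑ i ∈ s, (Nat.card (O ⧸ I i) : ℝ)⁻¹) :=
    calc δ T ≤ ∏ i ∈ s, (1 - (Nat.card (O ⧸ I i) : ℝ)⁻¹) := by
          simpa only [one_div, Finset.prod_coe_sort s fun i ↦ 1 - (Nat.card (O ⧸ I i) : ℝ)⁻¹]
            using hprod
      _ ≤ ∏ i ∈ s, Real.exp (-(Nat.card (O ⧸ I i) : ℝ)⁻¹) :=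
          Finset.prod_le_prod (fun i _ ↦ sub_nonneg.mpr (Nat.cast_inv_le_one _))
            fun i _ ↦ Real.one_sub_le_exp_neg _
      _ = Real.exp (-∑ i ∈ s, (Nat.card (O ⧸ I i) : ℝ)⁻¹) := by
          rw [← Finset.sum_neg_distrib, Real.exp_sum]
  linarith [(Real.log_le_iff_le_exp hpos).mpr hle]

end IsDensity

end Density

section ResidueMap

open HeightOneSpectrum

variable {R : Type*} [CommRing R] [IsDedekindDomain R] (F : Type*) [Field F] [Algebra R F]
  [IsFractionRing R F]

/-- Reduction modulo `P` of the elements of the fraction field that are integral at `P`. -/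
noncomputable def residueMap (P : HeightOneSpectrum R) :
    valuationSubringAtPrime F P →+* R ⧸ P.asIdeal :=
  IsLocalization.lift (M := P.asIdeal.primeCompl) (g := Ideal.Quotient.mk P.asIdeal) fun y ↦ by
    have := P.isMaximal
    let := Ideal.Quotient.field P.asIdeal
    exact .mk0 _ (Ideal.Quotient.eq_zero_iff_mem.not.mpr y.2)

lemma residueMap_algebraMap (P : HeightOneSpectrum R) (x : R) :
    residueMap F P (algebraMap R _ x) = Ideal.Quotient.mk P.asIdeal x :=
  IsLocalization.lift_eq _ x

variable {F}

lemma mem_valuationSubringAtPrime_iff {P : HeightOneSpectrum R} {x : F} :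
    x ∈ valuationSubringAtPrime F P ↔ P.valuation F x ≤ 1 := by
  rw [valuationSubringAtPrime_eq_valuationSubring, Valuation.mem_valuationSubring_iff]

end ResidueMap

section NormForm

lemma isSquare_eval₂_of_eval_eq {O F : Type*} [CommRing O] [CommRing F] (φ : O →+* F)
    {A f : O[X]} {n s t : O} (hf : f.eval₂ φ (φ n) = 0)
    (h : A.eval n = s ^ 2 - f.eval n * t ^ 2) : IsSquare (A.eval₂ φ (φ n)) := by
  rw [eval₂_at_apply] at hf ⊢
  rw [h, map_sub, map_mul, hf, zero_mul, sub_zero, map_pow]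
  exact .sq _

open HeightOneSpectrum in
lemma exists_ringHom_quotient_forall_ne {O R F : Type*} [CommRing O] [CommRing R]
    [IsDedekindDomain R] [Field F] [Algebra R F] [IsFractionRing R F] (i : O →+* F)
    {P : HeightOneSpectrum R} (hi : ∀ x, P.valuation F (i x) ≤ 1) {θ : F}
    (hθ : P.valuation F θ ≤ 1) {A f : O[X]} (hf : f.eval₂ i θ = 0) {α b : R}
    (hα : algebraMap R F α = algebraMap R F b ^ 2 * A.eval₂ i θ)
    (hαP : ¬ IsSquare (Ideal.Quotient.mk P.asIdeal α)) :
    ∃ (φ : O →+* R ⧸ P.asIdeal) (r : R ⧸ P.asIdeal),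
      ∀ n s t : O, A.eval n = s ^ 2 - f.eval n * t ^ 2 → φ n ≠ r := by
  let V := valuationSubringAtPrime F P
  let j : O →+* V := i.codRestrict V.toSubring fun x ↦ mem_valuationSubringAtPrime_iff.mpr (hi x)
  let η : V := ⟨θ, mem_valuationSubringAtPrime_iff.mpr hθ⟩
  have hcoe (g : O[X]) : ((g.eval₂ j η : V) : F) = g.eval₂ i θ := g.hom_eval₂ j V.subtype η
  have hfη : f.eval₂ j η = 0 := Subtype.ext ((hcoe f).trans hf)
  have hαη : algebraMap R V α = algebraMap R V b ^ 2 * A.eval₂ j η := by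
    apply FaithfulSMul.algebraMap_injective V F
    rw [map_mul, map_pow, ← IsScalarTower.algebraMap_apply, ← IsScalarTower.algebraMap_apply, hα]
    exact congr_arg _ (hcoe A).symm
  refine ⟨(residueMap F P).comp j, residueMap F P η, fun n s t h hn ↦ hαP ?_⟩
  have hsq : IsSquare (residueMap F P (A.eval₂ j η)) := by
    rw [hom_eval₂, ← hn]
    refine isSquare_eval₂_of_eval_eq _ ?_ h
    rw [hn, ← hom_eval₂, hfη, map_zero]
  rw [← residueMap_algebraMap F, hαη, map_mul, map_pow]
  exact (IsSquare.sq _).mul hsq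

namespace IsDensity

variable {O : Type*} [CommRing O] {δ : Set O → ℝ}

lemma eq_zero_of_forall_ringHom_zmod_ne [Infinite O] (hδ : IsDensity δ) {Q : Set ℕ}
    (hQ : ∀ p ∈ Q, p.Prime) (hdiv : ¬ Summable fun p : Q ↦ (p : ℝ)⁻¹) {T : Set O}
    (hT : ∀ p : Q, ∃ (φ : O →+* ZMod p) (r : ZMod p), ∀ n ∈ T, φ n ≠ r) : δ T = 0 := by
  choose φ r hφ using hT
  let e (p : Q) : O ⧸ RingHom.ker (φ p) ≃+* ZMod p :=
    RingHom.quotientKerEquivOfSurjective (ZMod.ringHom_surjective (φ p))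
  have hcard (p : Q) : Nat.card (O ⧸ RingHom.ker (φ p)) = p := by
    rw [Nat.card_congr (e p).toEquiv, Nat.card_zmod]
  refine hδ.eq_zero_of_not_summable (I := fun p ↦ RingHom.ker (φ p))
    (r := fun p ↦ (e p).symm (r p)) (fun p q hpq ↦ ?_)
    (fun p ↦ (hcard p).symm ▸ (hQ p p.2).one_lt) (fun n hn p h ↦ hφ p n hn ?_) ?_
  · obtain ⟨u, v, huv⟩ : IsCoprime ((p : ℕ) : O) ((q : ℕ) : O) :=
      ((Nat.coprime_primes (hQ p p.2) (hQ q q.2)).mpr (Subtype.coe_ne_coe.mpr hpq)).cast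
    have hmem (p : Q) : ((p : ℕ) : O) ∈ RingHom.ker (φ p) := by
      rw [RingHom.mem_ker, map_natCast, CharP.cast_eq_zero]
    exact Ideal.isCoprime_iff_exists.mpr
      ⟨_, Ideal.mul_mem_left _ u (hmem p), _, Ideal.mul_mem_left _ v (hmem q), huv⟩
  · rw [RingEquiv.eq_symm_apply] at h
    exact h
  · simpa only [hcard] using hdiv

lemma setOf_eval_eq_sq_sub_mul_sq_eq_zero (hδ : IsDensity δ) {L : Type*} [Field L] [NumberField L]
    (i : O →+* L) (hi : {P : HeightOneSpectrum (𝓞 L) | ¬ ∀ x, P.valuation L (i x) ≤ 1}.Finite)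
    {θ : L} {A f : O[X]} (hf : f.eval₂ i θ = 0) (hA : ¬ IsSquare (A.eval₂ i θ)) :
    δ {n | ∃ s t, A.eval n = s ^ 2 - f.eval n * t ^ 2} = 0 := by
  have := i.charZero
  obtain ⟨a, b, hb, hab⟩ := IsFractionRing.div_surjective (A := 𝓞 L) (A.eval₂ i θ)
  have hb0 : algebraMap (𝓞 L) L b ≠ 0 :=
    IsFractionRing.to_map_ne_zero_of_mem_nonZeroDivisors hb
  have hα : algebraMap (𝓞 L) L (a * b) = algebraMap (𝓞 L) L b ^ 2 * A.eval₂ i θ := by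
    rw [← hab, map_mul]
    field_simp
  have hαL : ¬ IsSquare ((a * b : 𝓞 L) : L) := fun h ↦ hA <| by
    rw [← mul_div_cancel_left₀ (A.eval₂ i θ) (pow_ne_zero 2 hb0), ← hα]
    exact h.div (.sq _)
  refine hδ.eq_zero_of_forall_ringHom_zmod_ne (fun p hp ↦ hp.1)
    (not_summable_prime_absNorm (not_summable_nonsquarePrimes hαL)
      (hi.union (HeightOneSpectrum.Support.finite (𝓞 L) θ))) ?_
  rintro ⟨p, hp, P, ⟨hαP, hP⟩, hPp⟩
  simp only [Set.mem_union, HeightOneSpectrum.Support, Set.mem_ofPred_eq, not_or, not_not,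
    not_lt] at hP
  obtain ⟨φ, r, hφ⟩ := exists_ringHom_quotient_forall_ne i hP.1 hP.2 hf hα hαP
  have := Fintype.ofFinite (𝓞 L ⧸ P.asIdeal)
  let e : ZMod p ≃+* 𝓞 L ⧸ P.asIdeal := ZMod.ringEquivOfPrime _ hp <| by
    rw [← hPp, Ideal.absNorm_apply, Submodule.cardQuot_apply, Nat.card_eq_fintype_card]
  refine ⟨e.symm.toRingHom.comp φ, e.symm r, ?_⟩
  rintro n ⟨s, t, h⟩ hn
  exact hφ n s t h (e.symm.injective hn)

end IsDensity

end NormForm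

section Under

variable {R R' : Type*} [CommRing R] [IsDedekindDomain R] [CommRing R'] [IsDedekindDomain R']
  [Algebra R R'] [Module.IsTorsionFree R R'] [Algebra.IsIntegral R R']

lemma finite_preimage_under {S : Set (HeightOneSpectrum R)} (hS : S.Finite) :
    (HeightOneSpectrum.under R (B := R') ⁻¹' S).Finite := by
  refine hS.preimage' fun v _ ↦
    .of_injOn (f := HeightOneSpectrum.asIdeal) (t := v.asIdeal.primesOver R') ?_
      HeightOneSpectrum.asIdeal_injective.injOn (IsDedekindDomain.primesOver_finite v.asIdeal R')
  rintro w rfl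
  exact ⟨w.isPrime, ⟨rfl⟩⟩

variable {F F' : Type*} [Field F] [Field F'] [Algebra F F'] [Algebra R F] [IsFractionRing R F]
  [Algebra R F'] [IsScalarTower R F F'] [Algebra R' F'] [IsFractionRing R' F']
  [IsScalarTower R R' F']

lemma valuation_algebraMap_le_one_of_under_notMem {S : Set (HeightOneSpectrum R)}
    (x : S.integer F) {w : HeightOneSpectrum R'} (hw : w.under R ∉ S) :
    w.valuation F' (algebraMap F F' x) ≤ 1 := by
  have : w.asIdeal.LiesOver (w.under R).asIdeal := ⟨rfl⟩
  rw [← HeightOneSpectrum.valuation_liesOver F' (w.under R) w]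
  exact pow_le_one₀ zero_le (S.integer_valuation_le_one F x hw)

end Under

section TrivialSpecializations

variable {O : Type*} [CommRing O]

/-- The set of those `n` at which the specialization `[A(n), 2B(n), C(n)]` is equivalent to the
trivial form `[1, 0, -f(n)]` under the twisted action of `GL₂(O)`. The factor `(det M)⁻¹` of that
action is cleared to the other side. -/
def trivialSpecializations (f A B C : O[X]) : Set O :=
  {n | ∃ M : Matrix (Fin 2) (Fin 2) O, IsUnit M.det ∧ ∀ x y : O,
    M.det * (A.eval n * x ^ 2 + 2 * B.eval n * x * y + C.eval n * y ^ 2) =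
      (M 0 0 * x + M 0 1 * y) ^ 2 - f.eval n * (M 1 0 * x + M 1 1 * y) ^ 2}

lemma trivialSpecializations_subset (f A B C : O[X]) {E : Set Oˣ}
    (hE : ∀ u : Oˣ, ∃ ε ∈ E, ∃ v : Oˣ, u = ε * v ^ 2) :
    trivialSpecializations f A B C ⊆
      ⋃ ε ∈ E, {n | ∃ s t, (Polynomial.C (ε : O) * A).eval n = s ^ 2 - f.eval n * t ^ 2} := by
  rintro n ⟨M, hM, hn⟩
  obtain ⟨ε, hε, v, hv⟩ := hE hM.unit
  have hdet : M.det = ε * v ^ 2 := by simpa using congr_arg Units.val hv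
  have hfirst : M.det * A.eval n = M 0 0 ^ 2 - f.eval n * M 1 0 ^ 2 := by simpa using hn 1 0
  refine Set.mem_iUnion₂.mpr ⟨ε, hε, M 0 0 * ↑v⁻¹, M 1 0 * ↑v⁻¹, ?_⟩
  calc (Polynomial.C (ε : O) * A).eval n
      = ε * (v * ↑v⁻¹) ^ 2 * A.eval n := by
        rw [eval_mul, eval_C, Units.mul_inv, one_pow, mul_one]
    _ = M.det * A.eval n * ↑v⁻¹ ^ 2 := by rw [hdet]; ring
    _ = (M 0 0 * ↑v⁻¹) ^ 2 - f.eval n * (M 1 0 * ↑v⁻¹) ^ 2 := by rw [hfirst]; ring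

end TrivialSpecializations

theorem density_bound_trivial_specializations_general (K : Type*) [Field K] [NumberField K]
    (S : Finset (HeightOneSpectrum (𝓞 K))) (f A B C : (SInt K S)[X]) {δ : Set (SInt K S) → ℝ}
    (hδ : IsDensity δ) (E : Finset (SInt K S)ˣ)
    (hE : ∀ u : (SInt K S)ˣ, ∃ ε ∈ E, ∃ v : (SInt K S)ˣ, u = ε * v ^ 2)
    (ρ : (SInt K S)ˣ → AlgebraicClosure K)
    (hρroot : ∀ ε ∈ E, aeval (ρ ε) (f.map (algebraMap (SInt K S) K)) = 0)
    (hρnotsq : ∀ ε ∈ E, ¬ IsSquare (algebraMap (SInt K S) K⟮ρ ε⟯ ε *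
      aeval (AdjoinSimple.gen K (ρ ε)) A)) :
    δ (trivialSpecializations f A B C) = 0 := by
  have hzero (ε : (SInt K S)ˣ) (hε : ε ∈ E) :
      δ {n | ∃ s t, (Polynomial.C (ε : SInt K S) * A).eval n = s ^ 2 - f.eval n * t ^ 2} = 0 := by
    have := adjoin.finiteDimensional (Algebra.IsIntegral.isIntegral (R := K) (ρ ε))
    have := NumberField.of_module_finite K K⟮ρ ε⟯
    have hroot : aeval (AdjoinSimple.gen K (ρ ε)) (f.map (algebraMap (SInt K S) K)) = 0 :=
      Subtype.ext ((AdjoinSimple.coe_aeval_gen_apply ..).trans (hρroot ε hε))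
    refine hδ.setOf_eval_eq_sq_sub_mul_sq_eq_zero (algebraMap (SInt K S) K⟮ρ ε⟯)
      ((finite_preimage_under S.finite_toSet).subset fun P ↦ not_imp_comm.mp fun hP x ↦
        valuation_algebraMap_le_one_of_under_notMem x hP) (θ := AdjoinSimple.gen K (ρ ε)) ?_ ?_
    · rwa [aeval_def, eval₂_map] at hroot
    · rw [eval₂_mul, eval₂_C]
      exact hρnotsq ε hε
  obtain ⟨ε, hε, -⟩ := hE 1
  refine ((hδ.mono _ _ (trivialSpecializations_subset f A B C hE)).trans ?_).antisymm (hδ.nonneg _)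
  exact (hδ.biUnion_le ⟨ε, hε⟩ _).trans_eq (Finset.sum_eq_zero hzero)

/-- **Density bound for trivial specializations.**
`K` a number field, `f ∈ O_K[X]` monic squarefree of odd degree `≥ 3`, `S` a
finite set of primes with `O = O_{K,S}` a PID, `δ` a density on `O`. Let
`[A,2B,C]` be a primitive form over `O[X]` with `B² − AC = f`, `A` coprime to
`f` in `K[X]`, not in the principal genus over `K[X]`. Let `E` be a finite set
of representatives of `Oˣ/(Oˣ)²`; for `ε ∈ E`, let `ρ_ε` be a root of `f` in
`K̄` with `ε·A(ρ_ε)` not a square in `K(ρ_ε)`, and let `P_ε` be the set of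
nonzero primes of the ring of `S_ε`-integers of `K(ρ_ε)` (the integral closure
of `O` in `K(ρ_ε)`), of residue degree `1` over `K`, at which the residue of
`ε·A(ρ_ε)` is a nonzero nonsquare. Then
`δ(T_triv) ≤ Σ_{ε ∈ E} inf_F Π_{𝔭 ∈ F} (1 − 1/N(𝔭))`, the infimum being over
finite subsets `F` of `P_ε`. -/
theorem density_bound_trivial_specializations
    (K : Type*) [Field K] [NumberField K]
    (S : Finset (HeightOneSpectrum (𝓞 K)))
    (hPID : IsPrincipalIdealRing (SInt K S))
    (f : Polynomial (𝓞 K)) (hmonic : f.Monic) (hsqfree : Squarefree f)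
    (hodd : Odd f.natDegree) (hdeg : 3 ≤ f.natDegree)
    (δ : Set (SInt K S) → ℝ)
    (hδ01 : ∀ P, 0 ≤ δ P ∧ δ P ≤ 1)
    (hδuniv : δ Set.univ = 1)
    (hδmono : ∀ P Q, P ⊆ Q → δ P ≤ δ Q)
    (hδunion : ∀ P Q, δ (P ∪ Q) ≤ δ P + δ Q)
    (hδtrans : ∀ (α : SInt K S) (P : Set (SInt K S)), δ ((α + ·) '' P) = δ P)
    (hδideal : ∀ I : Ideal (SInt K S), I ≠ ⊥ →
        δ (I : Set (SInt K S)) = 1 / (Nat.card (SInt K S ⧸ I) : ℝ))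
    (A B C : Polynomial (SInt K S))
    (hrel : B ^ 2 - A * C = f.map (algebraMap (𝓞 K) (SInt K S)))
    (hprim : Ideal.span {A, 2 * B, C} = (⊤ : Ideal (Polynomial (SInt K S))))
    (hcop : IsCoprime (A.map (algebraMap (SInt K S) K)) (f.map (algebraMap (𝓞 K) K)))
    (hgenus : ¬ ∃ ε : K, ε ≠ 0 ∧ ∃ p : K[X],
        (f.map (algebraMap (𝓞 K) K)) ∣
          (A.map (algebraMap (SInt K S) K) - Polynomial.C ε * p ^ 2))
    -- `E` is a finite set of representatives of `Oˣ/(Oˣ)²`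
    (E : Finset (SInt K S)ˣ)
    (hEcomplete : ∀ u : (SInt K S)ˣ, ∃ ε ∈ E, ∃ v : (SInt K S)ˣ, u = ε * v ^ 2)
    (hEirred : ∀ ε₁ ∈ E, ∀ ε₂ ∈ E, (∃ v : (SInt K S)ˣ, ε₁ = ε₂ * v ^ 2) → ε₁ = ε₂)
    -- for each `ε ∈ E`, `ρ ε` is a root of `f` with `ε·A(ρ ε)` not a square in `K(ρ ε)`
    (ρ : (SInt K S)ˣ → AlgebraicClosure K)
    (hρroot : ∀ ε ∈ E, aeval (ρ ε) (f.map (algebraMap (𝓞 K) K)) = 0)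
    (hρnotsq : ∀ ε ∈ E, ¬ ∃ z : K⟮ρ ε⟯, z ^ 2 =
        algebraMap (SInt K S) K⟮ρ ε⟯ ((ε : (SInt K S)ˣ) : SInt K S)
          * aeval (AdjoinSimple.gen K (ρ ε)) A) :
    δ {n : SInt K S |
        ∃ M : Matrix (Fin 2) (Fin 2) (SInt K S), IsUnit M.det ∧
          ∀ x y : SInt K S,
            M.det * (A.eval n * x ^ 2 + 2 * B.eval n * x * y + C.eval n * y ^ 2) =
              (M 0 0 * x + M 0 1 * y) ^ 2
                - (f.map (algebraMap (𝓞 K) (SInt K S))).eval n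
                  * (M 1 0 * x + M 1 1 * y) ^ 2}
      ≤ ∑ ε ∈ E,
          ⨅ F : {F : Finset (Ideal (integralClosure (SInt K S) K⟮ρ ε⟯)) //
              ∀ 𝔭 ∈ F, 𝔭.IsPrime ∧ 𝔭 ≠ ⊥ ∧ 𝔭 ≠ ⊤ ∧
                -- residue degree 1 over `K`
                Nat.card ((integralClosure (SInt K S) K⟮ρ ε⟯) ⧸ 𝔭) =
                  Nat.card (SInt K S ⧸
                    𝔭.comap (algebraMap (SInt K S) (integralClosure (SInt K S) K⟮ρ ε⟯))) ∧
                -- the residue of `ε·A(ρ ε)` mod `𝔭` is a nonzero nonsquare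
                ∃ w : integralClosure (SInt K S) K⟮ρ ε⟯,
                  algebraMap (integralClosure (SInt K S) K⟮ρ ε⟯) K⟮ρ ε⟯ w =
                    algebraMap (SInt K S) K⟮ρ ε⟯ ((ε : (SInt K S)ˣ) : SInt K S)
                      * aeval (AdjoinSimple.gen K (ρ ε)) A ∧
                  Ideal.Quotient.mk 𝔭 w ≠ 0 ∧
                  ¬ ∃ t : integralClosure (SInt K S) K⟮ρ ε⟯,
                    (Ideal.Quotient.mk 𝔭 t) ^ 2 = Ideal.Quotient.mk 𝔭 w},
            ∏ 𝔭 ∈ (F : Finset (Ideal (integralClosure (SInt K S) K⟮ρ ε⟯))),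
              (1 - 1 / (Nat.card ((integralClosure (SInt K S) K⟮ρ ε⟯) ⧸ 𝔭) : ℝ)) := by
  have hmap : (f.map (algebraMap (𝓞 K) (SInt K S))).map (algebraMap (SInt K S) K) =
      f.map (algebraMap (𝓞 K) K) := by
    rw [Polynomial.map_map, ← IsScalarTower.algebraMap_eq]
  have hδ : IsDensity δ := ⟨hδmono, hδunion, hδtrans, hδideal⟩
  have hzero := density_bound_trivial_specializations_general K S _ A B C hδ E hEcomplete ρ
    (by rwa [hmap]) fun ε hε ⟨z, hz⟩ ↦ hρnotsq ε hε ⟨z, by rw [sq, hz]⟩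
  refine hzero.trans_le (Finset.sum_nonneg fun ε _ ↦ Real.iInf_nonneg fun F ↦
    Finset.prod_nonneg fun 𝔭 _ ↦ ?_)
  rw [one_div]
  exact sub_nonneg.mpr (Nat.cast_inv_le_one _)
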